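/- Gauss–Hermite cubature for the Gaussian unitary ensemble: for every f ∈ ℙ^{(2m+1,n)}, (1/(π^{n/2} n!)) ∫_{−∞}^{∞}⋯∫_{−∞}^{∞} f(x) Π_{j=1}^n e^{−x_j²} Π_{1≤j<k≤n}(x_j−x_k)² dx_1⋯dx_n = Σ_{λ̂ ∈ Λ^{(m,n)}} f(x_λ̂^{(m,n)}) W_λ̂, where W_λ̂ = (m+n)^{−n} Π_{j=1}^n (h_{m+n−1}(x^{(m+n)}_{λ̂_j+n−j}))^{−2} · Π_{1≤j<k≤n}(x^{(m+n)}_{λ̂_j+n−j} − x^{(m+n)}_{λ̂_k+n−k})². -/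

import Mathlib

open MeasureTheory Real Finset

noncomputable section

/-- Vandermonde product `∏_{j<k} (x_j - x_k)`. -/
def vand (n : ℕ) (x : Fin n → ℝ) : ℝ :=
  ∏ j : Fin n, ∏ k ∈ Finset.univ.filter (fun k => j < k), (x j - x k)

/-- The fundamental alcove `Λ^{(m,n)}` : decreasing sequences with entries ≤ m. -/
def Lam (m n : ℕ) : Finset (Fin n → ℕ) :=
  (Fintype.piFinset fun _ => Finset.range (m + 1)).filter
    fun lam => ∀ i j : Fin n, i ≤ j → lam j ≤ lam i

/-- The node `x^{(m,n)}_λ̂` with `j`-th component `x^{(m+n)}_{λ̂_j + n - j}`. -/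
def node (n : ℕ) (xr : ℕ → ℝ) (lh : Fin n → ℕ) : Fin n → ℝ :=
  fun j => xr (lh j + (n - 1 - (j : ℕ)))

/-- The symmetric monomial `M_λ(x)`. -/
def msym (n : ℕ) (lam : Fin n → ℕ) : (Fin n → ℝ) → ℝ := fun x =>
  ∑ mu ∈ Finset.univ.image (fun σ : Equiv.Perm (Fin n) => lam ∘ σ), ∏ j : Fin n, x j ^ mu j

/-- The space `ℙ^{(m,n)}`: span of the symmetric monomials `M_λ`, `λ ∈ Λ^{(m,n)}`. -/
def pSpace (m n : ℕ) : Submodule ℝ ((Fin n → ℝ) → ℝ) :=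
  Submodule.span ℝ (msym n '' (Lam m n : Set (Fin n → ℕ)))

/-!
Integration by parts against `e^{-t²}` shows that the derivative of `h_{N+1}` is a multiple of
`h_N`; this gives the Gauss quadrature rule at the roots of `h_{N+1}` its weights
`((N + 1) h_N(x)²)⁻¹`. With `N + 1 = m + n` the rule is exact up to degree `2(m + n) - 1`, which
bounds the degree of `f · vand²` in each variable, so the `n`-fold product rule integrates
`f · vand²` exactly. The resulting sum over the grid of `n`-tuples of roots is symmetric and
vanishes at tuples with a repeated entry. Hence it is `n!` times the sum over strictly decreasing
index tuples, and these are the partitions in `Λ^{(m,n)}` shifted by the staircase `(n-1, …, 1, 0)`.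
-/

section OrthonormalPolynomials

open Polynomial

variable {F : Type*} [Field F]

/-- The polynomials `S 0, S 1, …` (with `deg (S l) = l`) are orthonormal for the bilinear form
`(p, q) ↦ L (p * q)` attached to a moment functional `L`. -/
def IsOrthonormalFor (L : F[X] →ₗ[F] F) (S : Polynomial.Sequence F) : Prop :=
  ∀ l k, L (S l * S k) = if l = k then 1 else 0

namespace IsOrthonormalFor

variable {L : F[X] →ₗ[F] F} {S : Polynomial.Sequence F}

theorem eq_sum_of_degree_lt (hS : IsOrthonormalFor L S) {n : ℕ} {q : F[X]} (hq : q.degree < n) :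
    q = ∑ j ∈ range n, L (S j * q) • S j := by
  have hunit : ∀ i < n, IsUnit (S i).leadingCoeff := fun i _ => by simp
  rw [← mem_degreeLT, ← S.span_degreeLT hunit] at hq
  induction hq using Submodule.span_induction with
  | mem q hq =>
    obtain ⟨i, hi, rfl⟩ := hq
    simp [hS _ i, Set.mem_Iio.mp hi]
  | zero => simp
  | add p q _ _ hp hq =>
    simp only [mul_add, map_add, add_smul, sum_add_distrib, ← hp, ← hq]
  | smul a q _ hq =>
    simp only [mul_smul_comm, map_smul, smul_assoc, ← smul_sum, ← hq]

theorem map_mul_eq_zero_of_degree_lt (hS : IsOrthonormalFor L S) {l : ℕ} {q : F[X]}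
    (hq : q.degree < l) : L (S l * q) = 0 := by
  rw [hS.eq_sum_of_degree_lt hq, mul_sum, map_sum]
  refine sum_eq_zero fun j hj => ?_
  rw [mul_smul_comm, map_smul, hS, if_neg (mem_range.mp hj).ne', smul_zero]

theorem map_mul_eq_coeff_div (hS : IsOrthonormalFor L S) {l : ℕ} {q : F[X]}
    (hq : q.degree < (l + 1 : ℕ)) : L (S l * q) = q.coeff l / (S l).leadingCoeff := by
  have hlow : ∑ j ∈ range l, L (S j * q) * (S j).coeff l = 0 :=
    sum_eq_zero fun j hj => by
      rw [coeff_eq_zero_of_natDegree_lt (by simpa using hj), mul_zero]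
  have hcoeff : q.coeff l = L (S l * q) * (S l).leadingCoeff := by
    conv_lhs => rw [hS.eq_sum_of_degree_lt hq, finsetSum_coeff]
    simp only [coeff_smul, smul_eq_mul, sum_range_succ, hlow, zero_add]
    rw [leadingCoeff, S.natDegree_eq]
  rw [hcoeff, mul_div_cancel_right₀ _ (leadingCoeff_ne_zero.mpr (S.ne_zero l))]

theorem map_mul_derivative_eq_zero (hS : IsOrthonormalFor L S) {c : F}
    (hL : ∀ p, L (derivative p) = c * L (X * p)) {j l : ℕ} (hjl : j + 1 < l) :
    L (S j * derivative (S l)) = 0 := by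
  have hX : (X * S j).degree < (l : WithBot ℕ) := by
    rw [degree_mul, degree_X, S.degree_eq]
    exact_mod_cast (by omega : 1 + j < l)
  have hderiv : (derivative (S j)).degree < l := by
    refine degree_derivative_le.trans_lt ?_
    rw [S.degree_eq]
    exact_mod_cast (by omega : j < l)
  have hparts : S j * derivative (S l) = derivative (S l * S j) - S l * derivative (S j) := by
    rw [derivative_mul]
    ring
  rw [hparts, map_sub, hL, mul_left_comm, hS.map_mul_eq_zero_of_degree_lt hX,
    hS.map_mul_eq_zero_of_degree_lt hderiv, mul_zero, sub_zero]

theorem derivative_succ (hS : IsOrthonormalFor L S) {c : F}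
    (hL : ∀ p, L (derivative p) = c * L (X * p)) (N : ℕ) :
    derivative (S (N + 1)) =
      ((N + 1) * (S (N + 1)).leadingCoeff / (S N).leadingCoeff) • S N := by
  have hdeg : (derivative (S (N + 1))).degree < (N + 1 : ℕ) := by
    simpa using degree_derivative_lt (S.ne_zero (N + 1))
  have hcoeff : (derivative (S (N + 1))).coeff N = (N + 1) * (S (N + 1)).leadingCoeff := by
    rw [coeff_derivative, leadingCoeff, S.natDegree_eq, mul_comm]
  have hlow : ∑ j ∈ range N, L (S j * derivative (S (N + 1))) • S j = 0 :=
    sum_eq_zero fun j hj => by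
      rw [hS.map_mul_derivative_eq_zero hL (Nat.succ_lt_succ (mem_range.mp hj)), zero_smul]
  conv_lhs => rw [hS.eq_sum_of_degree_lt hdeg]
  rw [sum_range_succ, hlow, zero_add, hS.map_mul_eq_coeff_div hdeg, hcoeff]

end IsOrthonormalFor

end OrthonormalPolynomials

section GaussQuadrature

open Polynomial Lagrange

variable {F ι : Type*} [Field F] {s : Finset ι} {x : ι → F}

theorem eq_C_leadingCoeff_mul_nodal (hx : Set.InjOn x s) {p : F[X]} (hdeg : p.degree = #s)
    (hroot : ∀ i ∈ s, p.eval (x i) = 0) : p = C p.leadingCoeff * nodal s x := by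
  have hlead : p.leadingCoeff ≠ 0 := leadingCoeff_ne_zero.mpr <| by
    rintro rfl
    simp at hdeg
  refine eq_of_degree_le_of_eval_index_eq s hx hdeg.le ?_ ?_ fun i hi => ?_
  · rw [degree_C_mul hlead, degree_nodal, hdeg]
  · rw [leadingCoeff_C_mul_of_isUnit hlead.isUnit, nodal_monic.leadingCoeff, mul_one]
  · rw [hroot i hi, eval_mul, eval_nodal_at_node hi, mul_zero]

theorem degree_divByMonic_nodal_lt {p : F[X]} (hp : p.degree < (2 * #s : ℕ)) :
    (p /ₘ nodal s x).degree < #s := by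
  by_cases hle : (nodal s x).degree ≤ p.degree
  · have hsum := degree_add_divByMonic (nodal_monic (s := s) (v := x)) hle
    rw [← hsum, degree_nodal, two_mul, Nat.cast_add] at hp
    exact lt_of_add_lt_add_left hp
  · rw [(divByMonic_eq_zero_iff nodal_monic).mpr (not_le.mp hle), degree_zero]
    exact WithBot.bot_lt_coe _

variable {L : F[X] →ₗ[F] F} {S : Polynomial.Sequence F}

theorem IsOrthonormalFor.map_nodal_mul_eq_zero (hS : IsOrthonormalFor L S)
    (hx : Set.InjOn x s) (hroot : ∀ i ∈ s, (S #s).eval (x i) = 0)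
    {q : F[X]} (hq : q.degree < #s) : L (nodal s x * q) = 0 := by
  have hlead : (S #s).leadingCoeff ≠ 0 := leadingCoeff_ne_zero.mpr (S.ne_zero _)
  have hzero := hS.map_mul_eq_zero_of_degree_lt hq
  rw [eq_C_leadingCoeff_mul_nodal hx (S.degree_eq _) hroot, mul_assoc, ← smul_eq_C_mul, map_smul,
    smul_eq_mul] at hzero
  exact (mul_eq_zero.mp hzero).resolve_left hlead

variable [DecidableEq ι]

theorem modByMonic_nodal_eq_interpolate (hx : Set.InjOn x s) (p : F[X]) :
    p %ₘ nodal s x = interpolate s x fun i => p.eval (x i) := by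
  refine eq_interpolate_of_eval_eq _ hx ?_ fun i hi => ?_
  · exact (degree_modByMonic_lt p nodal_monic).trans_eq degree_nodal
  · conv_rhs => rw [← modByMonic_add_div p (nodal s x)]
    simp [eval_nodal_at_node hi]

/-- Dividing `p` by the nodal polynomial leaves a quotient of degree `< #s`, which `L` does not see,
and a remainder which is recovered from the values of `p` at the nodes. -/
theorem gauss_quadrature (hx : Set.InjOn x s)
    (horth : ∀ q : F[X], q.degree < #s → L (nodal s x * q) = 0)
    {p : F[X]} (hp : p.degree < (2 * #s : ℕ)) :
    L p = ∑ i ∈ s, p.eval (x i) * L (Lagrange.basis s x i) := by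
  calc L p = L (p %ₘ nodal s x) + L (nodal s x * (p /ₘ nodal s x)) := by
        rw [← map_add, modByMonic_add_div]
    _ = L (interpolate s x fun i => p.eval (x i)) := by
        rw [horth _ (degree_divByMonic_nodal_lt hp), add_zero, modByMonic_nodal_eq_interpolate hx]
    _ = ∑ i ∈ s, p.eval (x i) * L (Lagrange.basis s x i) := by
        simp only [interpolate_apply, map_sum, ← smul_eq_C_mul, map_smul, smul_eq_mul]

namespace IsOrthonormalFor

variable {N : ℕ}

/-- Both sides are `L (S N * ℓ)` for the `i`-th Lagrange basis polynomial `ℓ`: the left one by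
Gauss quadrature, the right one by comparing leading coefficients. -/
theorem eval_mul_map_basis (hS : IsOrthonormalFor L S) (hx : Set.InjOn x s) (hcard : #s = N + 1)
    (hroot : ∀ i ∈ s, (S #s).eval (x i) = 0) {i : ι} (hi : i ∈ s) :
    (S N).eval (x i) * L (Lagrange.basis s x i) = nodalWeight s x i / (S N).leadingCoeff := by
  have hdeg : (Lagrange.basis s x i).degree = N := by rw [degree_basis hx hi, hcard]; rfl
  have hquad : L (S N * Lagrange.basis s x i) =
      (S N).eval (x i) * L (Lagrange.basis s x i) := by
    rw [gauss_quadrature hx (fun q => hS.map_nodal_mul_eq_zero hx hroot), sum_eq_single_of_mem i hi,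
      eval_mul, eval_basis_self hx hi, mul_one]
    · intro j hj hji
      rw [eval_mul, eval_basis_of_ne hji.symm hj, mul_zero, zero_mul]
    · rw [degree_mul, S.degree_eq, hdeg]
      exact_mod_cast (by omega : N + N < 2 * #s)
  have hlead : (Lagrange.basis s x i).coeff N = nodalWeight s x i := by
    rw [nodalWeight, prod_inv_distrib, ← leadingCoeff_basis hx hi, leadingCoeff,
      natDegree_eq_of_degree_eq_some hdeg]
  rw [← hquad, hS.map_mul_eq_coeff_div, hlead]
  rw [hdeg]
  exact_mod_cast N.lt_succ_self

theorem map_basis_eq_inv (hS : IsOrthonormalFor L S) {c : F}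
    (hL : ∀ p, L (derivative p) = c * L (X * p)) (hx : Set.InjOn x s) (hcard : #s = N + 1)
    (hroot : ∀ i ∈ s, (S #s).eval (x i) = 0) {i : ι} (hi : i ∈ s) :
    L (Lagrange.basis s x i) = ((N + 1) * (S N).eval (x i) ^ 2)⁻¹ := by
  have hleadN : (S N).leadingCoeff ≠ 0 := leadingCoeff_ne_zero.mpr (S.ne_zero N)
  have hlead : (S #s).leadingCoeff ≠ 0 := leadingCoeff_ne_zero.mpr (S.ne_zero _)
  have hweight := nodalWeight_ne_zero hx hi
  have hderiv : (S #s).leadingCoeff * (nodalWeight s x i)⁻¹ =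
      (N + 1) * (S #s).leadingCoeff / (S N).leadingCoeff * (S N).eval (x i) := by
    have hnodal := eq_C_leadingCoeff_mul_nodal hx (S.degree_eq _) hroot
    rw [nodalWeight_eq_eval_derivative_nodal hi, inv_inv, ← eval_C_mul, ← derivative_C_mul,
      ← hnodal, hcard, hS.derivative_succ hL, eval_smul, smul_eq_mul]
  have hinv : (nodalWeight s x i / (S N).leadingCoeff)⁻¹ = (N + 1) * (S N).eval (x i) := by
    field_simp at hderiv ⊢
    exact hderiv
  have heval : (S N).eval (x i) ≠ 0 := by
    intro h0
    rw [h0, mul_zero, inv_eq_zero] at hinv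
    exact div_ne_zero hweight hleadN hinv
  rw [← hS.eval_mul_map_basis hx hcard hroot hi] at hinv
  rw [sq, ← mul_assoc, ← hinv]
  field_simp

end IsOrthonormalFor

end GaussQuadrature

section WeightedIntegral

open Polynomial

variable {ρ : ℝ → ℝ}

theorem integrable_eval_mul (hρ : ∀ k : ℕ, Integrable fun t => t ^ k * ρ t) (p : ℝ[X]) :
    Integrable fun t => p.eval t * ρ t := by
  simp only [eval_eq_sum_range, sum_mul, mul_assoc]
  exact integrable_finsetSum _ fun k _ => (hρ k).const_mul _

/-- The moment functional `p ↦ ∫ p(t) ρ(t) dt` of a weight function `ρ` with finite moments. -/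
def weightedIntegral (ρ : ℝ → ℝ) (hρ : ∀ k : ℕ, Integrable fun t => t ^ k * ρ t) :
    ℝ[X] →ₗ[ℝ] ℝ where
  toFun p := ∫ t, p.eval t * ρ t
  map_add' p q := by
    simp only [eval_add, add_mul]
    exact integral_add (integrable_eval_mul hρ p) (integrable_eval_mul hρ q)
  map_smul' a p := by
    simp only [eval_smul, smul_eq_mul, mul_assoc, RingHom.id_apply]
    exact integral_const_mul _ _

end WeightedIntegral

section GaussHermite

open Polynomial

/-- The weight `π^{-1/2} e^{-t²}` of the normalized Hermite polynomials. -/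
def hermiteWeight (t : ℝ) : ℝ :=
  Real.exp (-t ^ 2) / √π

theorem integrable_pow_mul_hermiteWeight (k : ℕ) :
    Integrable fun t : ℝ => t ^ k * hermiteWeight t := by
  have hk : (-1 : ℝ) < k := neg_one_lt_zero.trans_le k.cast_nonneg
  simpa [hermiteWeight, mul_div_assoc] using
    (integrable_rpow_mul_exp_neg_mul_sq one_pos hk).div_const √π

theorem hasDerivAt_hermiteWeight (t : ℝ) :
    HasDerivAt hermiteWeight (-(2 * t) * hermiteWeight t) t := by
  refine ((hasDerivAt_pow 2 t).neg.exp.div_const √π).congr_deriv ?_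
  simp only [hermiteWeight, Pi.neg_apply]
  push_cast
  ring

/-- The moment functional of the Hermite weight. -/
def hermiteFunctional : ℝ[X] →ₗ[ℝ] ℝ :=
  weightedIntegral hermiteWeight integrable_pow_mul_hermiteWeight

theorem hermiteFunctional_apply (p : ℝ[X]) :
    hermiteFunctional p = ∫ t, p.eval t * hermiteWeight t :=
  rfl

theorem hermiteFunctional_derivative (p : ℝ[X]) :
    hermiteFunctional (derivative p) = 2 * hermiteFunctional (X * p) := by
  have hint := integrable_eval_mul integrable_pow_mul_hermiteWeight
  have hderiv (t : ℝ) : HasDerivAt (fun t => p.eval t * hermiteWeight t)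
      ((derivative p - (2 : ℝ) • (X * p)).eval t * hermiteWeight t) t := by
    refine ((p.hasDerivAt t).mul (hasDerivAt_hermiteWeight t)).congr_deriv ?_
    simp only [eval_sub, eval_smul, eval_mul, eval_X, smul_eq_mul]
    ring
  have hzero : hermiteFunctional (derivative p - (2 : ℝ) • (X * p)) = 0 :=
    integral_eq_zero_of_hasDerivAt_of_integrable hderiv (hint _) (hint p)
  rwa [map_sub, map_smul, smul_eq_mul, sub_eq_zero] at hzero

theorem integral_pow_mul_hermiteWeight_eq_sum {S : Polynomial.Sequence ℝ}
    (hS : IsOrthonormalFor hermiteFunctional S) {ι : Type*} {s : Finset ι} {x : ι → ℝ}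
    {N : ℕ} (hx : Set.InjOn x s) (hcard : #s = N + 1) (hroot : ∀ i ∈ s, (S #s).eval (x i) = 0)
    {k : ℕ} (hk : k < 2 * #s) :
    ∫ t, t ^ k * hermiteWeight t = ∑ i ∈ s, x i ^ k * ((N + 1) * (S N).eval (x i) ^ 2)⁻¹ := by
  classical
  have hdeg : (X ^ k : ℝ[X]).degree < (2 * #s : ℕ) := by
    rw [degree_X_pow]
    exact_mod_cast hk
  calc ∫ t, t ^ k * hermiteWeight t = hermiteFunctional (X ^ k) := by
        simp only [hermiteFunctional_apply, eval_pow, eval_X]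
    _ = ∑ i ∈ s, (X ^ k : ℝ[X]).eval (x i) * hermiteFunctional (Lagrange.basis s x i) :=
        gauss_quadrature hx (fun _ => hS.map_nodal_mul_eq_zero hx hroot) hdeg
    _ = ∑ i ∈ s, x i ^ k * ((N + 1) * (S N).eval (x i) ^ 2)⁻¹ :=
        sum_congr rfl fun i hi => by
          rw [hS.map_basis_eq_inv hermiteFunctional_derivative hx hcard hroot hi, eval_pow, eval_X]

end GaussHermite

section ProductQuadrature

theorem integral_eval_mul_prod_eq_sum {σ ι : Type*} [Fintype σ] [DecidableEq σ] {ρ : ℝ → ℝ}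
    (hρ : ∀ k : ℕ, Integrable fun t => t ^ k * ρ t) {s : Finset ι} {x w : ι → ℝ} {K : ℕ}
    (hquad : ∀ k < K, ∫ t, t ^ k * ρ t = ∑ i ∈ s, x i ^ k * w i)
    {p : MvPolynomial σ ℝ} (hp : ∀ j, p.degreeOf j < K) :
    ∫ t : σ → ℝ, MvPolynomial.eval t p * ∏ j, ρ (t j) =
      ∑ k ∈ Fintype.piFinset fun _ => s, MvPolynomial.eval (x ∘ k) p * ∏ j, w (k j) := by
  have hmonomial : ∀ d ∈ p.support, ∫ t : σ → ℝ, ∏ j, t j ^ d j * ρ (t j) =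
      ∑ k ∈ Fintype.piFinset fun _ => s, ∏ j, x (k j) ^ d j * w (k j) := fun d hd => by
    rw [integral_fintype_prod_volume_eq_prod fun j t => t ^ d j * ρ t,
      prod_congr rfl fun j _ => hquad (d j) ((MvPolynomial.degreeOf_lt_iff
        (Nat.zero_lt_of_lt (hp j))).mp (hp j) d hd), prod_univ_sum]
  have hint (d : σ →₀ ℕ) : Integrable fun t : σ → ℝ => ∏ j, t j ^ d j * ρ (t j) :=
    Integrable.fintype_prod (f := fun j t => t ^ d j * ρ t) fun j => hρ (d j)
  simp only [MvPolynomial.eval_eq', sum_mul, mul_assoc, ← prod_mul_distrib, Function.comp_apply]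
  rw [integral_finsetSum _ fun d _ => (hint d).const_mul _, sum_comm]
  refine sum_congr rfl fun d hd => ?_
  rw [integral_const_mul, hmonomial d hd, mul_sum]

end ProductQuadrature

section Symmetrization

theorem existsUnique_perm_strictAnti_comp {α : Type*} [LinearOrder α] {n : ℕ} {k : Fin n → α}
    (hk : Function.Injective k) : ∃! σ : Equiv.Perm (Fin n), StrictAnti (k ∘ σ) := by
  have hsort : StrictAnti (k ∘ Tuple.sort (OrderDual.toDual ∘ k)) :=
    ((Tuple.monotone_sort (OrderDual.toDual ∘ k)).strictMono_of_injective
      (hk.comp (Equiv.injective _))).dual_right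
  refine ⟨_, hsort, fun τ hτ => Equiv.ext fun j => hk ?_⟩
  exact congrFun (Tuple.unique_antitone hτ.antitone hsort.antitone) j

theorem sum_piFinset_eq_factorial_nsmul_sum_strictAnti {α M : Type*} [LinearOrder α]
    [AddCommMonoid M] {n : ℕ} (s : Finset α) {G : (Fin n → α) → M}
    (hsymm : ∀ (k : Fin n → α) (σ : Equiv.Perm (Fin n)), G (k ∘ σ) = G k)
    (hzero : ∀ k : Fin n → α, ¬ Function.Injective k → G k = 0) :
    ∑ k ∈ Fintype.piFinset fun _ => s, G k =
      n.factorial • ∑ k ∈ Fintype.piFinset fun _ => s with StrictAnti k, G k := by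
  classical
  calc ∑ k ∈ Fintype.piFinset fun _ => s, G k
      = ∑ k ∈ Fintype.piFinset fun _ => s, ∑ σ : Equiv.Perm (Fin n),
          if StrictAnti (k ∘ σ) then G k else 0 := by
        refine sum_congr rfl fun k _ => ?_
        by_cases hk : Function.Injective k
        · obtain ⟨σ, hσ, huniq⟩ := existsUnique_perm_strictAnti_comp hk
          rw [Fintype.sum_eq_single σ fun τ hτ => if_neg (mt (huniq τ) hτ), if_pos hσ]
        · simp [hzero k hk]
    _ = ∑ σ : Equiv.Perm (Fin n), ∑ k ∈ Fintype.piFinset fun _ => s,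
          if StrictAnti (k ∘ σ) then G (k ∘ σ) else 0 := by
        simp only [hsymm]
        exact sum_comm
    _ = ∑ _σ : Equiv.Perm (Fin n), ∑ k ∈ Fintype.piFinset fun _ => s,
          if StrictAnti k then G k else 0 := by
        refine sum_congr rfl fun σ _ => ?_
        refine sum_equiv (σ.symm.arrowCongr (Equiv.refl α)) (fun k => ?_) fun k _ => rfl
        simp only [Fintype.mem_piFinset]
        exact (σ.forall_congr_right (q := fun j => k j ∈ s)).symm
    _ = n.factorial • ∑ k ∈ Fintype.piFinset fun _ => s with StrictAnti k, G k := by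
        rw [sum_const, card_univ, Fintype.card_perm, Fintype.card_fin, sum_filter]

theorem antitone_add_val_of_strictAnti {n : ℕ} {k : Fin n → ℕ} (hk : StrictAnti k) :
    Antitone fun j => k j + (j : ℕ) := by
  cases n with
  | zero => exact fun i => i.elim0
  | succ n =>
    refine Fin.antitone_iff_succ_le.mpr fun i => ?_
    have := hk i.castSucc_lt_succ
    simp only [Fin.val_succ, Fin.val_castSucc]
    omega

theorem mem_Lam {m n : ℕ} {lam : Fin n → ℕ} :
    lam ∈ Lam m n ↔ (∀ j, lam j ≤ m) ∧ Antitone lam := by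
  simp [Lam, Antitone]

/-- The bijection `λ ↦ λ + (n-1, …, 1, 0)` from partitions with parts at most `m` onto strict
partitions with parts less than `m + n`, which turns `λ̂` into the root indices of its node. -/
def staircaseShift {n : ℕ} (lam : Fin n → ℕ) (j : Fin n) : ℕ :=
  lam j + (n - 1 - (j : ℕ))

theorem staircaseShift_injective {n : ℕ} :
    Function.Injective (staircaseShift : (Fin n → ℕ) → Fin n → ℕ) :=
  fun _ _ h => funext fun j => Nat.add_right_cancel (congrFun h j)

theorem image_staircaseShift_Lam (m n : ℕ) :
    (Lam m n).image staircaseShift =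
      ({k ∈ Fintype.piFinset fun _ => range (m + n) | StrictAnti k} : Finset (Fin n → ℕ)) := by
  ext k
  simp only [mem_image, mem_Lam, mem_filter, Fintype.mem_piFinset, mem_range]
  constructor
  · rintro ⟨lam, ⟨hle, hanti⟩, rfl⟩
    refine ⟨fun j => ?_, fun i j hij => ?_⟩
    · have := hle j
      simp only [staircaseShift]
      omega
    · have := hanti hij.le
      simp only [staircaseShift]
      omega
  · rintro ⟨hlt, hk⟩
    have hanti := antitone_add_val_of_strictAnti hk
    have hfirst (j : Fin n) : k j + (j : ℕ) ≤ k ⟨0, j.pos⟩ :=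
      @hanti ⟨0, j.pos⟩ j (Nat.zero_le j)
    have hlast (j : Fin n) : n - 1 ≤ k j + (j : ℕ) :=
      (Nat.le_add_left _ _).trans <|
        @hanti j ⟨n - 1, Nat.sub_one_lt j.pos.ne'⟩ (Nat.le_sub_one_of_lt j.isLt)
    refine ⟨fun j => k j - (n - 1 - (j : ℕ)), ⟨fun j => ?_, fun i j hij => ?_⟩, ?_⟩
    · have := hfirst j
      have := hlt ⟨0, j.pos⟩
      beta_reduce
      omega
    · have : k j + (j : ℕ) ≤ k i + (i : ℕ) := hanti hij
      have := hlast i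
      have := hlast j
      beta_reduce
      omega
    · exact funext fun j => Nat.sub_add_cancel (Nat.sub_le_iff_le_add.mpr (hlast j))

theorem sum_piFinset_range_eq_factorial_nsmul_sum_Lam {M : Type*} [AddCommMonoid M] (m : ℕ) {n : ℕ}
    {G : (Fin n → ℕ) → M}
    (hsymm : ∀ (k : Fin n → ℕ) (σ : Equiv.Perm (Fin n)), G (k ∘ σ) = G k)
    (hzero : ∀ k : Fin n → ℕ, ¬ Function.Injective k → G k = 0) :
    ∑ k ∈ Fintype.piFinset fun _ => range (m + n), G k =
      n.factorial • ∑ lam ∈ Lam m n, G (staircaseShift lam) := by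
  rw [sum_piFinset_eq_factorial_nsmul_sum_strictAnti _ hsymm hzero, ← image_staircaseShift_Lam,
    sum_image staircaseShift_injective.injOn]

end Symmetrization

section Vandermonde

variable {n : ℕ}

theorem vand_sq_eq_det_sq (x : Fin n → ℝ) :
    vand n x ^ 2 = (Matrix.vandermonde x).det ^ 2 := by
  simp only [Matrix.det_vandermonde, vand, ← prod_pow, filter_lt_eq_Ioi]
  exact prod_congr rfl fun i _ => prod_congr rfl fun j _ => by ring

theorem vand_sq_comp_perm (x : Fin n → ℝ) (σ : Equiv.Perm (Fin n)) :
    vand n (x ∘ σ) ^ 2 = vand n x ^ 2 := by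
  have hrows : Matrix.vandermonde (x ∘ σ) = (Matrix.vandermonde x).submatrix σ id := rfl
  have hsign : ((Equiv.Perm.sign σ : ℤ) : ℝ) ^ 2 = 1 := by
    rw [← Int.cast_pow, ← Units.val_pow_eq_pow_val, Int.units_sq, Units.val_one, Int.cast_one]
  rw [vand_sq_eq_det_sq, vand_sq_eq_det_sq, hrows, Matrix.det_permute, mul_pow, hsign, one_mul]

theorem vand_sq_eq_zero_of_not_injective {x : Fin n → ℝ} (hx : ¬ Function.Injective x) :
    vand n x ^ 2 = 0 := by
  have hdet : (Matrix.vandermonde x).det = 0 :=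
    not_ne_iff.mp (mt Matrix.det_vandermonde_ne_zero_iff.mp hx)
  rw [vand_sq_eq_det_sq, hdet, sq, zero_mul]

end Vandermonde

section SymmetricPolynomials

open MvPolynomial

theorem degreeOf_prod_X_pow_le {σ R : Type*} [Fintype σ] [CommSemiring R] (d : σ → ℕ) (i : σ) :
    (∏ j, X j ^ d j : MvPolynomial σ R).degreeOf i ≤ d i := by
  classical
  rcases subsingleton_or_nontrivial R with _ | _
  · simp [Subsingleton.elim (∏ j, X j ^ d j : MvPolynomial σ R) 0]
  refine (degreeOf_prod_le _ _ _).trans_eq ?_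
  rw [Fintype.sum_eq_single i fun j hj => degreeOf_X_pow_of_ne _ hj.symm,
    degreeOf_X_self_pow]

variable {n : ℕ}

theorem degreeOf_det_vandermonde_X_le (R : Type*) [CommRing R] (i : Fin n) :
    (Matrix.vandermonde (X : Fin n → MvPolynomial (Fin n) R)).det.degreeOf i ≤ n - 1 := by
  rw [← Matrix.det_transpose, Matrix.det_apply]
  refine (degreeOf_sum_le _ _ _).trans (Finset.sup_le fun σ _ => ?_)
  have hsign : degreeOf i (Equiv.Perm.sign σ • ∏ j, (X j : MvPolynomial (Fin n) R) ^ (σ j : ℕ)) ≤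
      degreeOf i (∏ j, (X j : MvPolynomial (Fin n) R) ^ (σ j : ℕ)) := by
    rcases Int.units_eq_one_or (Equiv.Perm.sign σ) with h | h <;> simp [h]
  exact hsign.trans ((degreeOf_prod_X_pow_le _ i).trans (Nat.le_sub_one_of_lt (σ i).isLt))

theorem eval_det_vandermonde_X {R : Type*} [CommRing R] (x : Fin n → R) :
    eval x (Matrix.vandermonde (X : Fin n → MvPolynomial (Fin n) R)).det =
      (Matrix.vandermonde x).det := by
  rw [RingHom.map_det]
  congr 1
  ext i j
  simp [Matrix.vandermonde_apply]

theorem msym_comp_perm (lam : Fin n → ℕ) (x : Fin n → ℝ) (σ : Equiv.Perm (Fin n)) :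
    msym n lam (x ∘ σ) = msym n lam x := by
  refine sum_equiv (σ.arrowCongr (Equiv.refl ℕ)) (fun mu => ?_) fun mu _ => ?_
  · simp only [mem_image, mem_univ, true_and]
    constructor
    · rintro ⟨τ, rfl⟩
      exact ⟨σ.symm.trans τ, rfl⟩
    · rintro ⟨τ, hτ⟩
      exact ⟨σ.trans τ, funext fun j => by simpa using congrFun hτ (σ j)⟩
  · rw [← Equiv.prod_comp σ fun j => x j ^ _]
    simp

theorem pSpace_comp_perm {K : ℕ} {f : (Fin n → ℝ) → ℝ} (hf : f ∈ pSpace K n)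
    (x : Fin n → ℝ) (σ : Equiv.Perm (Fin n)) : f (x ∘ σ) = f x := by
  induction hf using Submodule.span_induction with
  | mem f hf =>
    obtain ⟨lam, -, rfl⟩ := hf
    exact msym_comp_perm lam x σ
  | zero => rfl
  | add f g _ _ hf hg => simp only [Pi.add_apply, hf, hg]
  | smul a f _ hf => simp only [Pi.smul_apply, hf]

theorem exists_mvPolynomial_eval_eq_msym {K : ℕ} {lam : Fin n → ℕ} (hlam : ∀ j, lam j ≤ K) :
    ∃ p : MvPolynomial (Fin n) ℝ, (∀ i, p.degreeOf i ≤ K) ∧ ∀ x, eval x p = msym n lam x := by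
  refine ⟨∑ mu ∈ univ.image fun σ : Equiv.Perm (Fin n) => lam ∘ σ, ∏ j, X j ^ mu j,
    fun i => ?_, fun x => ?_⟩
  · refine (degreeOf_sum_le _ _ _).trans (Finset.sup_le fun mu hmu => ?_)
    obtain ⟨σ, -, rfl⟩ := mem_image.mp hmu
    exact (degreeOf_prod_X_pow_le _ i).trans (hlam (σ i))
  · simp only [map_sum, map_prod, map_pow, eval_X, msym]

theorem exists_mvPolynomial_eval_eq_of_mem_pSpace {K : ℕ} {f : (Fin n → ℝ) → ℝ}
    (hf : f ∈ pSpace K n) :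
    ∃ p : MvPolynomial (Fin n) ℝ, (∀ i, p.degreeOf i ≤ K) ∧ ∀ x, eval x p = f x := by
  induction hf using Submodule.span_induction with
  | mem f hf =>
    obtain ⟨lam, hlam, rfl⟩ := hf
    exact exists_mvPolynomial_eval_eq_msym (mem_Lam.mp hlam).1
  | zero => exact ⟨0, by simp, by simp⟩
  | add f g _ _ hf hg =>
    obtain ⟨p, hp, hpf⟩ := hf
    obtain ⟨q, hq, hqg⟩ := hg
    refine ⟨p + q, fun i => (degreeOf_add_le _ _ _).trans (max_le (hp i) (hq i)), fun x => ?_⟩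
    rw [map_add, hpf, hqg, Pi.add_apply]
  | smul a f _ hf =>
    obtain ⟨p, hp, hpf⟩ := hf
    refine ⟨C a * p, fun i => (degreeOf_C_mul_le _ _ _).trans (hp i), fun x => ?_⟩
    rw [map_mul, eval_C, hpf, Pi.smul_apply, smul_eq_mul]

theorem exists_mvPolynomial_eval_eq_mul_vand_sq {m : ℕ} {f : (Fin n → ℝ) → ℝ}
    (hf : f ∈ pSpace (2 * m + 1) n) :
    ∃ p : MvPolynomial (Fin n) ℝ,
      (∀ i, p.degreeOf i < 2 * (m + n)) ∧ ∀ x, eval x p = f x * vand n x ^ 2 := by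
  obtain ⟨p, hp, hpf⟩ := exists_mvPolynomial_eval_eq_of_mem_pSpace hf
  refine ⟨p * (Matrix.vandermonde X).det ^ 2, fun i => ?_, fun x => ?_⟩
  · have hmul := degreeOf_mul_le i p ((Matrix.vandermonde X).det ^ 2)
    have hpow := degreeOf_pow_le i (Matrix.vandermonde (X : _ → MvPolynomial (Fin n) ℝ)).det 2
    have hdet := degreeOf_det_vandermonde_X_le ℝ i
    have hpi := hp i
    have hn := i.pos
    omega
  · rw [map_mul, map_pow, hpf, eval_det_vandermonde_X, vand_sq_eq_det_sq]

end SymmetricPolynomials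

section Cubature

theorem integral_mul_prod_mul_vand_sq_eq_sum_Lam {m n : ℕ} {ρ : ℝ → ℝ}
    (hρ : ∀ k : ℕ, Integrable fun t => t ^ k * ρ t) {x w : ℕ → ℝ}
    (hquad : ∀ k < 2 * (m + n), ∫ t, t ^ k * ρ t = ∑ i ∈ range (m + n), x i ^ k * w i)
    {f : (Fin n → ℝ) → ℝ} (hf : f ∈ pSpace (2 * m + 1) n) :
    ∫ t : Fin n → ℝ, f t * (∏ j, ρ (t j)) * vand n t ^ 2 =
      n.factorial * ∑ lam ∈ Lam m n,
        f (node n x lam) * ((∏ j, w (staircaseShift lam j)) * vand n (node n x lam) ^ 2) := by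
  obtain ⟨p, hp, hpf⟩ := exists_mvPolynomial_eval_eq_mul_vand_sq hf
  have hcub := integral_eval_mul_prod_eq_sum hρ hquad hp
  simp only [hpf] at hcub
  have hcollapse := sum_piFinset_range_eq_factorial_nsmul_sum_Lam m
    (G := fun k : Fin n → ℕ => f (x ∘ k) * vand n (x ∘ k) ^ 2 * ∏ j, w (k j))
    (fun k σ => by
      simp only [← Function.comp_assoc, pSpace_comp_perm hf, vand_sq_comp_perm]
      rw [← Equiv.prod_comp σ fun j => w (k j)]
      rfl)
    (fun k hk => by
      rw [vand_sq_eq_zero_of_not_injective fun hxk => hk hxk.of_comp, mul_zero, zero_mul])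
  calc ∫ t : Fin n → ℝ, f t * (∏ j, ρ (t j)) * vand n t ^ 2
      = ∫ t : Fin n → ℝ, f t * vand n t ^ 2 * ∏ j, ρ (t j) := by simp only [mul_right_comm]
    _ = n.factorial • ∑ lam ∈ Lam m n, f (node n x lam) * vand n (node n x lam) ^ 2 *
          ∏ j, w (staircaseShift lam j) := hcub.trans hcollapse
    _ = n.factorial * ∑ lam ∈ Lam m n, f (node n x lam) *
          ((∏ j, w (staircaseShift lam j)) * vand n (node n x lam) ^ 2) := by
        simp only [nsmul_eq_mul, mul_assoc, mul_comm]

theorem integral_mul_prod_hermiteWeight_mul {σ : Type*} [Fintype σ] (f g : (σ → ℝ) → ℝ) :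
    ∫ t, f t * (∏ j, hermiteWeight (t j)) * g t =
      (√π ^ Fintype.card σ)⁻¹ * ∫ t, f t * (∏ j, Real.exp (-(t j) ^ 2)) * g t := by
  simp only [hermiteWeight, prod_div_distrib, prod_const, card_univ, ← integral_const_mul]
  congr with t
  ring

end Cubature

theorem gauss_hermite_cubature_GUE
    (n : ℕ) (hn : 0 < n) (m : ℕ)
    -- the normalized Hermite polynomials: orthonormal w.r.t. π^{-1/2} e^{-x²} on ℝ
    (h : ℕ → Polynomial ℝ)
    (hdeg : ∀ l, (h l).degree = l)
    (hlead : ∀ l, 0 < (h l).leadingCoeff)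
    (horth : ∀ l k, (∫ x : ℝ, (h l).eval x * (h k).eval x * (Real.exp (-x ^ 2) / Real.sqrt π))
      = if l = k then 1 else 0)
    -- the ordered roots of h_{m+n}
    (xr : ℕ → ℝ)
    (hxr_mono : ∀ k l : ℕ, k < l → l < m + n → xr k < xr l)
    (hxr_root : ∀ l < m + n, (h (m + n)).eval (xr l) = 0)
    -- a symmetric polynomial of degree at most 2m+1 in each variable
    (f : (Fin n → ℝ) → ℝ)
    (hf : f ∈ pSpace (2 * m + 1) n) :
    (1 / (Real.sqrt π ^ n * n.factorial)) *
      (∫ x : Fin n → ℝ, f x * (∏ j, Real.exp (-(x j) ^ 2)) * vand n x ^ 2)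
    = ∑ lh ∈ Lam m n,
        f (node n xr lh) *
          ((((m : ℝ) + n) ^ n)⁻¹ *
            (∏ j : Fin n, (((h (m + n - 1)).eval (xr (lh j + (n - 1 - (j : ℕ))))) ^ 2)⁻¹) *
            vand n (node n xr lh) ^ 2) := by
  obtain ⟨N, hN⟩ : ∃ N, m + n = N + 1 := ⟨m + n - 1, by omega⟩
  have hS : IsOrthonormalFor hermiteFunctional ⟨h, hdeg⟩ := fun l k => by
    simpa only [hermiteFunctional_apply, Polynomial.eval_mul, hermiteWeight] using horth l k
  have hinj : Set.InjOn xr (range (m + n)) :=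
    StrictMonoOn.injOn fun k _ l hl hkl => hxr_mono k l hkl (mem_range.mp hl)
  have hquad (k : ℕ) (hk : k < 2 * (m + n)) : ∫ t, t ^ k * hermiteWeight t =
      ∑ i ∈ range (m + n), xr i ^ k * ((N + 1) * (h N).eval (xr i) ^ 2)⁻¹ :=
    integral_pow_mul_hermiteWeight_eq_sum hS hinj (by rw [card_range, hN])
      (by simpa using hxr_root) (by rwa [card_range])
  have hcub := integral_mul_prod_mul_vand_sq_eq_sum_Lam integrable_pow_mul_hermiteWeight hquad hf
  rw [integral_mul_prod_hermiteWeight_mul, Fintype.card_fin] at hcub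
  have hfact : (n.factorial : ℝ) ≠ 0 := Nat.cast_ne_zero.mpr n.factorial_ne_zero
  have hN' : (m : ℝ) + n = N + 1 := by exact_mod_cast hN
  rw [one_div, mul_inv_rev, mul_assoc, hcub, inv_mul_cancel_left₀ hfact, hN', hN,
    Nat.add_sub_cancel]
  simp only [mul_inv, prod_mul_distrib, prod_const, card_univ, Fintype.card_fin, inv_pow,
    staircaseShift]

end
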